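/- Let d ≥ 1, let a, b ∈ ℝ^d with b ≠ 0, let ς ≥ 0, and let ξ satisfy 0 < ξ ≤ ‖b‖₂. Let x be a standard Gaussian vector in ℝ^d and let g ∼ N(0, ς²) be independent of x (with g ≡ 0 when ς = 0). Then | E[ 1{|⟨b,x⟩ + g| ≥ ξ} · ( −cos(π·ξ^{−1}·(⟨b,x⟩ + g)) / (⟨b,x⟩ + g) ) · ⟨a,x⟩ ] | ≤ (‖a‖₂/‖b‖₂) · (‖b‖₂²/(ς² + ‖b‖₂²)) · 0.26·ξ³/(ς² + ‖b‖₂²)^{3/2}. -/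

import Mathlib

open MeasureTheory ProbabilityTheory

/-- The Euclidean norm on `ℝ^n`. -/
noncomputable def e2norm {n : ℕ} (v : Fin n → ℝ) : ℝ := Real.sqrt (∑ i, v i ^ 2)

/-- The standard Gaussian measure `N(0, I_n)` on `ℝ^n`. -/
noncomputable def stdGaussian (n : ℕ) : Measure (Fin n → ℝ) :=
  Measure.pi fun _ => gaussianReal 0 1

/-!
Put `Z = ⟨b, x⟩ + g`, `A = ⟨a, x⟩` and `h t = 1{|t| ≥ ξ} · (-cos (π ξ⁻¹ t) / t)`. Since `A` and `Z`
are jointly Gaussian, `Var Z · A - Cov(A, Z) · Z` is independent of `Z`, so that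
`Var Z · E[A h(Z)] = Cov(A, Z) · E[Z h(Z)]`, and `E[Z h(Z)]` is, up to sign, the integral of
`cos (π ξ⁻¹ t)` over `|t| ≥ ξ` against `N(0, v)`, where `v = Var Z`.

The integral over the whole line is the characteristic function `exp (-v (π / ξ)² / 2)`. The
integral over `|t| < ξ` runs over a full period of the cosine, so the density may be replaced by its
difference with its value at `0`, which is quadratic in `t`. Both are therefore of order
`ξ³ / v ^ (3 / 2)`, with constants `√6 / π³` and `1 / (3 √(2π))` that sum to less than `0.26`.
-/

open Real Set Matrix

/-- The weight `t ↦ 1{|t| ≥ ξ} · (−cos(π ξ⁻¹ t) / t)` that multiplies `⟨a, x⟩` in the expectation to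
be bounded, `t` standing for `⟨b, x⟩ + g`. -/
noncomputable def truncCosDiv (ξ t : ℝ) : ℝ :=
  if ξ ≤ |t| then -cos (π * ξ⁻¹ * t) / t else 0

theorem measurable_truncCosDiv (ξ : ℝ) : Measurable (truncCosDiv ξ) :=
  Measurable.ite (measurableSet_le measurable_const (by fun_prop)) (by fun_prop) measurable_const

theorem abs_truncCosDiv_le {ξ : ℝ} (hξ : 0 < ξ) (t : ℝ) : |truncCosDiv ξ t| ≤ 1 / ξ := by
  unfold truncCosDiv
  split_ifs with h
  · rw [abs_div, abs_neg]
    gcongr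
    exact abs_cos_le_one _
  · rw [abs_zero]
    positivity

theorem mul_truncCosDiv {ξ : ℝ} (hξ : 0 < ξ) (t : ℝ) :
    t * truncCosDiv ξ t = -{s | ξ ≤ |s|}.indicator (fun s ↦ cos (π * ξ⁻¹ * s)) t := by
  by_cases h : ξ ≤ |t|
  · have ht : t ≠ 0 := abs_pos.mp (hξ.trans_le h)
    rw [truncCosDiv, if_pos h, indicator_of_mem (show t ∈ {s | ξ ≤ |s|} from h),
      mul_div_cancel₀ _ ht]
  · rw [truncCosDiv, if_neg h, indicator_of_notMem (show t ∉ {s | ξ ≤ |s|} from h), mul_zero,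
      neg_zero]

theorem pow_mul_exp_neg_sq_div_two_le (n : ℕ) (x : ℝ) :
    x ^ n * exp (-(x ^ 2 / 2)) ≤ √n.factorial := by
  refine le_sqrt_of_sq_le ?_
  calc (x ^ n * exp (-(x ^ 2 / 2))) ^ 2 = (x ^ 2) ^ n * exp (-x ^ 2) := by
        rw [mul_pow, ← exp_nat_mul, ← pow_mul, ← pow_mul, mul_comm n]
        ring_nf
    _ ≤ n.factorial * exp (x ^ 2) * exp (-x ^ 2) := by
        gcongr
        exact (div_le_iff₀' (by positivity)).mp (pow_div_factorial_le_exp _ (sq_nonneg x) n)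
    _ = n.factorial := by rw [mul_assoc, ← exp_add, add_neg_cancel, exp_zero, mul_one]

theorem intervalIntegral_cos_pi_mul_inv_mul (ξ : ℝ) :
    ∫ y in -ξ..ξ, cos (π * ξ⁻¹ * y) = 0 := by
  rcases eq_or_ne ξ 0 with rfl | hξ
  · simp
  · have hw : π * ξ⁻¹ * ξ = π := by rw [mul_assoc, inv_mul_cancel₀ hξ, mul_one]
    rw [intervalIntegral.integral_comp_mul_left _ (by positivity), integral_cos, mul_neg, hw]
    simp

theorem abs_intervalIntegral_cos_mul_le {f : ℝ → ℝ} {c C ξ : ℝ} (hξ : 0 ≤ ξ)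
    (hf : IntervalIntegrable f volume (-ξ) ξ) (hfc : ∀ y, |f y - c| ≤ C * y ^ 2) :
    |∫ y in -ξ..ξ, cos (π * ξ⁻¹ * y) * f y| ≤ 2 / 3 * C * ξ ^ 3 := by
  have hcos : Continuous fun y ↦ cos (π * ξ⁻¹ * y) := by fun_prop
  have hsub : ∫ y in -ξ..ξ, cos (π * ξ⁻¹ * y) * f y =
      ∫ y in -ξ..ξ, cos (π * ξ⁻¹ * y) * (f y - c) := by
    simp_rw [mul_sub]
    rw [intervalIntegral.integral_sub (hf.continuousOn_mul hcos.continuousOn)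
      ((hcos.intervalIntegrable _ _).mul_const c), intervalIntegral.integral_mul_const,
      intervalIntegral_cos_pi_mul_inv_mul, zero_mul, sub_zero]
  have hbound (y : ℝ) : ‖cos (π * ξ⁻¹ * y) * (f y - c)‖ ≤ C * y ^ 2 := by
    rw [norm_mul]
    exact (mul_le_of_le_one_left (norm_nonneg _) (abs_cos_le_one _)).trans (hfc y)
  calc |∫ y in -ξ..ξ, cos (π * ξ⁻¹ * y) * f y|
      = ‖∫ y in -ξ..ξ, cos (π * ξ⁻¹ * y) * (f y - c)‖ := by rw [hsub, norm_eq_abs]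
    _ ≤ ∫ y in -ξ..ξ, C * y ^ 2 :=
        intervalIntegral.norm_integral_le_of_norm_le (by linarith)
          (ae_of_all _ fun y _ ↦ hbound y) (Continuous.intervalIntegrable (by fun_prop) _ _)
    _ = 2 / 3 * C * ξ ^ 3 := by
        rw [intervalIntegral.integral_const_mul, integral_pow]
        ring

theorem abs_gaussianPDFReal_sub_self_mean_le (m : ℝ) (v : NNReal) (y : ℝ) :
    |gaussianPDFReal m v y - gaussianPDFReal m v m| ≤
      (√(2 * π * v))⁻¹ * ((y - m) ^ 2 / (2 * v)) := by
  have hexp : |exp (-(y - m) ^ 2 / (2 * v)) - 1| ≤ (y - m) ^ 2 / (2 * v) := by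
    have hle : exp (-(y - m) ^ 2 / (2 * v)) ≤ 1 := by
      rw [exp_le_one_iff, neg_div, neg_nonpos]
      positivity
    have hge := add_one_le_exp (-(y - m) ^ 2 / (2 * v))
    rw [abs_of_nonpos (sub_nonpos.mpr hle)]
    linarith [neg_div (2 * (v : ℝ)) ((y - m) ^ 2)]
  calc |gaussianPDFReal m v y - gaussianPDFReal m v m|
      = (√(2 * π * v))⁻¹ * |exp (-(y - m) ^ 2 / (2 * v)) - 1| := by
        simp only [gaussianPDFReal, sub_self, ne_eq, OfNat.ofNat_ne_zero, not_false_eq_true,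
          zero_pow, neg_zero, zero_div, exp_zero]
        rw [← mul_sub, abs_mul, abs_of_nonneg (by positivity)]
    _ ≤ _ := by gcongr

theorem setIntegral_gaussianReal_eq_setIntegral_smul {E : Type*} [NormedAddCommGroup E]
    [NormedSpace ℝ E] (m : ℝ) {v : NNReal} (hv : v ≠ 0) (f : ℝ → E) {s : Set ℝ}
    (hs : MeasurableSet s) :
    ∫ y in s, f y ∂gaussianReal m v = ∫ y in s, gaussianPDFReal m v y • f y := by
  rw [← integral_indicator hs, integral_gaussianReal_eq_integral_smul hv, ← integral_indicator hs]
  simp_rw [indicator_smul_apply]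

theorem integral_cos_mul_gaussianReal (m : ℝ) (v : NNReal) (t : ℝ) :
    ∫ y, cos (t * y) ∂gaussianReal m v = cos (t * m) * exp (-(v * t ^ 2 / 2)) := by
  have hre (r θ : ℝ) : (Complex.exp (θ * Complex.I + r)).re = cos θ * exp r := by
    simp [Complex.exp_re, mul_comm]
  have hint : Integrable (fun y : ℝ ↦ Complex.exp (t * y * Complex.I)) (gaussianReal m v) :=
    Integrable.of_bound (by fun_prop) 1 (ae_of_all _ fun y ↦ by
      rw [← Complex.ofReal_mul, Complex.norm_exp_ofReal_mul_I])
  calc ∫ y, cos (t * y) ∂gaussianReal m v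
      = ∫ y, (Complex.exp (t * y * Complex.I)).re ∂gaussianReal m v := by
        simp_rw [← Complex.ofReal_mul, Complex.exp_ofReal_mul_I_re]
    _ = (charFun (gaussianReal m v) t).re := by
        rw [charFun_apply_real]
        exact integral_re hint
    _ = cos (t * m) * exp (-(v * t ^ 2 / 2)) := by
        rw [charFun_gaussianReal, ← hre]
        push_cast
        ring_nf

theorem exp_neg_mul_pi_div_sq_le {v ξ : ℝ} (hv : 0 < v) (hξ : 0 < ξ) :
    exp (-(v * (π * ξ⁻¹) ^ 2 / 2)) ≤ √6 / π ^ 3 * (ξ ^ 3 / √v ^ 3) := by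
  have h := pow_mul_exp_neg_sq_div_two_le 3 (√v * (π * ξ⁻¹))
  rw [mul_pow √v _ 2, sq_sqrt hv.le, ← le_div_iff₀' (by positivity)] at h
  calc exp (-(v * (π * ξ⁻¹) ^ 2 / 2)) ≤ √(Nat.factorial 3) / (√v * (π * ξ⁻¹)) ^ 3 := h
    _ = √6 / π ^ 3 * (ξ ^ 3 / √v ^ 3) := by
        norm_num [Nat.factorial]
        field_simp

theorem abs_setIntegral_Ioo_cos_gaussianReal_le {v : NNReal} (hv : v ≠ 0) {ξ : ℝ} (hξ : 0 ≤ ξ) :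
    |∫ y in Ioo (-ξ) ξ, cos (π * ξ⁻¹ * y) ∂gaussianReal 0 v| ≤
      1 / (3 * √(2 * π)) * (ξ ^ 3 / √v ^ 3) := by
  have hdensity (y : ℝ) : |gaussianPDFReal 0 v y - gaussianPDFReal 0 v 0| ≤
      (√(2 * π * v))⁻¹ / (2 * v) * y ^ 2 :=
    (abs_gaussianPDFReal_sub_self_mean_le 0 v y).trans_eq (by ring)
  calc |∫ y in Ioo (-ξ) ξ, cos (π * ξ⁻¹ * y) ∂gaussianReal 0 v|
      = |∫ y in -ξ..ξ, cos (π * ξ⁻¹ * y) * gaussianPDFReal 0 v y| := by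
        rw [setIntegral_gaussianReal_eq_setIntegral_smul 0 hv _ measurableSet_Ioo,
          intervalIntegral.integral_of_le (by linarith), integral_Ioc_eq_integral_Ioo]
        simp_rw [smul_eq_mul, mul_comm]
    _ ≤ 2 / 3 * ((√(2 * π * v))⁻¹ / (2 * v)) * ξ ^ 3 :=
        abs_intervalIntegral_cos_mul_le hξ (integrable_gaussianPDFReal 0 v).intervalIntegrable
          hdensity
    _ = 1 / (3 * √(2 * π)) * (ξ ^ 3 / √v ^ 3) := by
        rw [sqrt_mul (by positivity), pow_succ √(v : ℝ) 2, sq_sqrt v.coe_nonneg]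
        field_simp

theorem abs_setIntegral_le_abs_cos_gaussianReal_le {v : NNReal} (hv : v ≠ 0) {ξ : ℝ}
    (hξ : 0 < ξ) :
    |∫ y in {y | ξ ≤ |y|}, cos (π * ξ⁻¹ * y) ∂gaussianReal 0 v| ≤
      (√6 / π ^ 3 + 1 / (3 * √(2 * π))) * (ξ ^ 3 / √v ^ 3) := by
  have hcompl : {y : ℝ | ξ ≤ |y|} = (Ioo (-ξ) ξ)ᶜ := by
    ext y
    rw [mem_ofPred_eq, mem_compl_iff, mem_Ioo, ← abs_lt, not_lt]
  have hint : Integrable (fun y ↦ cos (π * ξ⁻¹ * y)) (gaussianReal 0 v) :=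
    Integrable.of_bound (by fun_prop) 1 (ae_of_all _ fun y ↦ abs_cos_le_one _)
  rw [hcompl, setIntegral_compl measurableSet_Ioo hint, integral_cos_mul_gaussianReal, mul_zero,
    cos_zero, one_mul, add_mul]
  refine (abs_sub _ _).trans (add_le_add ?_ (abs_setIntegral_Ioo_cos_gaussianReal_le hv hξ.le))
  rw [abs_exp]
  exact exp_neg_mul_pi_div_sq_le (by positivity) hξ

theorem sqrt_six_div_pi_pow_three_add_le : √6 / π ^ 3 + 1 / (3 * √(2 * π)) ≤ 0.26 := by
  have hpi := pi_gt_d2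
  have h6 : √6 ≤ 2.5 := sqrt_le_iff.mpr (by norm_num)
  have h2pi : 2.5 ≤ √(2 * π) := le_sqrt_of_sq_le (by linarith)
  calc √6 / π ^ 3 + 1 / (3 * √(2 * π)) ≤ 2.5 / 3.14 ^ 3 + 1 / (3 * 2.5) := by gcongr
    _ ≤ 0.26 := by norm_num

section JointlyGaussian

variable {Ω : Type*} [MeasurableSpace Ω] {P : Measure Ω} {A Z : Ω → ℝ}

theorem variance_mul_covariance_comp_eq (hAZ : HasGaussianLaw (fun ω ↦ (A ω, Z ω)) P)
    {h : ℝ → ℝ} (hh : Measurable h) (hhZ : MemLp (h ∘ Z) 2 P) :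
    Var[Z; P] * cov[A, h ∘ Z; P] = cov[A, Z; P] * cov[Z, h ∘ Z; P] := by
  have : IsProbabilityMeasure P := hAZ.isProbabilityMeasure
  have hA : MemLp A 2 P := hAZ.fst.memLp_two
  have hZ : MemLp Z 2 P := hAZ.snd.memLp_two
  set W : Ω → ℝ := Var[Z; P] • A - cov[A, Z; P] • Z
  have hcov (Y : Ω → ℝ) (hY : MemLp Y 2 P) :
      cov[W, Y; P] = Var[Z; P] * cov[A, Y; P] - cov[A, Z; P] * cov[Z, Y; P] := by
    rw [covariance_sub_left (hA.const_smul _) (hZ.const_smul _) hY, covariance_smul_left,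
      covariance_smul_left]
  have hWZ : HasGaussianLaw (fun ω ↦ (W ω, Z ω)) P :=
    hAZ.map_fun ((Var[Z; P] • ContinuousLinearMap.fst ℝ ℝ ℝ -
      cov[A, Z; P] • ContinuousLinearMap.snd ℝ ℝ ℝ).prod (ContinuousLinearMap.snd ℝ ℝ ℝ))
  have hindep : IndepFun W Z P := by
    refine hWZ.indepFun_of_covariance_eq_zero ?_
    rw [hcov Z hZ, covariance_self hZ.aemeasurable]
    ring
  have hzero : cov[W, h ∘ Z; P] = 0 :=
    (hindep.comp measurable_id hh).covariance_eq_zero ((hA.const_smul _).sub (hZ.const_smul _)) hhZ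
  rwa [hcov _ hhZ, sub_eq_zero] at hzero

theorem variance_mul_integral_mul_comp_eq (hAZ : HasGaussianLaw (fun ω ↦ (A ω, Z ω)) P)
    (hA₀ : P[A] = 0) (hZ₀ : P[Z] = 0) {h : ℝ → ℝ} (hh : Measurable h)
    (hhZ : MemLp (h ∘ Z) 2 P) :
    Var[Z; P] * ∫ ω, A ω * h (Z ω) ∂P = cov[A, Z; P] * ∫ ω, Z ω * h (Z ω) ∂P := by
  have : IsProbabilityMeasure P := hAZ.isProbabilityMeasure
  have := variance_mul_covariance_comp_eq hAZ hh hhZ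
  rwa [covariance_eq_sub hAZ.fst.memLp_two hhZ, covariance_eq_sub hAZ.snd.memLp_two hhZ, hA₀, hZ₀,
    zero_mul, sub_zero, sub_zero] at this

theorem integral_mul_truncCosDiv {ξ : ℝ} (hZ : HasGaussianLaw Z P) (hZ₀ : P[Z] = 0)
    (hξ : 0 < ξ) :
    ∫ ω, Z ω * truncCosDiv ξ (Z ω) ∂P =
      -∫ t in {t | ξ ≤ |t|}, cos (π * ξ⁻¹ * t) ∂gaussianReal 0 Var[Z; P].toNNReal := by
  have hset : MeasurableSet {t : ℝ | ξ ≤ |t|} := measurableSet_le measurable_const (by fun_prop)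
  have hlaw : P.map Z = gaussianReal 0 Var[Z; P].toNNReal := hZ₀ ▸ hZ.map_eq_gaussianReal
  rw [← integral_indicator hset, ← integral_neg, ← hlaw,
    integral_map hZ.aemeasurable (by fun_prop)]
  simp_rw [mul_truncCosDiv hξ]

theorem abs_integral_truncCosDiv_mul_le (hAZ : HasGaussianLaw (fun ω ↦ (A ω, Z ω)) P)
    (hA₀ : P[A] = 0) (hZ₀ : P[Z] = 0) (hv : 0 < Var[Z; P]) {ξ : ℝ} (hξ : 0 < ξ) :
    |∫ ω, truncCosDiv ξ (Z ω) * A ω ∂P| ≤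
      |cov[A, Z; P]| / Var[Z; P] * (0.26 * ξ ^ 3 / Var[Z; P] ^ (3 / 2 : ℝ)) := by
  have : IsProbabilityMeasure P := hAZ.isProbabilityMeasure
  have hhZ : MemLp (truncCosDiv ξ ∘ Z) 2 P :=
    MemLp.of_bound ((measurable_truncCosDiv ξ).comp_aemeasurable
      hAZ.snd.aemeasurable).aestronglyMeasurable (1 / ξ)
      (ae_of_all _ fun ω ↦ abs_truncCosDiv_le hξ (Z ω))
  have hregress := variance_mul_integral_mul_comp_eq hAZ hA₀ hZ₀ (measurable_truncCosDiv ξ) hhZ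
  rw [integral_mul_truncCosDiv hAZ.snd hZ₀ hξ] at hregress
  have htail := abs_setIntegral_le_abs_cos_gaussianReal_le (toNNReal_pos.mpr hv).ne' hξ
  rw [coe_toNNReal _ hv.le] at htail
  set I := ∫ t in {t | ξ ≤ |t|}, cos (π * ξ⁻¹ * t) ∂gaussianReal 0 Var[Z; P].toNNReal
  calc |∫ ω, truncCosDiv ξ (Z ω) * A ω ∂P|
      = |cov[A, Z; P]| / Var[Z; P] * |I| := by
        simp_rw [mul_comm (truncCosDiv ξ _)]
        rw [eq_div_of_mul_eq hv.ne' ((mul_comm _ _).trans hregress), abs_div, abs_mul, abs_neg,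
          abs_of_pos hv, mul_div_right_comm]
    _ ≤ |cov[A, Z; P]| / Var[Z; P] * (0.26 * (ξ ^ 3 / √Var[Z; P] ^ 3)) := by
        gcongr
        exact htail.trans (by gcongr; exact sqrt_six_div_pi_pow_three_add_le)
    _ = |cov[A, Z; P]| / Var[Z; P] * (0.26 * ξ ^ 3 / Var[Z; P] ^ (3 / 2 : ℝ)) := by
        rw [rpow_div_two_eq_sqrt _ hv.le, mul_div_assoc]
        norm_cast

end JointlyGaussian

section Prod

variable {Ω Ω' : Type*} [MeasurableSpace Ω] [MeasurableSpace Ω'] {μ : Measure Ω} {ν : Measure Ω'}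
  [IsProbabilityMeasure μ] [IsProbabilityMeasure ν] {X X' : Ω → ℝ} {Y : Ω' → ℝ}

theorem integral_fst_add_snd_prod (hX : Integrable X μ) (hY : Integrable Y ν) :
    ∫ p, (X p.1 + Y p.2) ∂μ.prod ν = ∫ x, X x ∂μ + ∫ y, Y y ∂ν := by
  rw [integral_add (hX.comp_fst ν) (hY.comp_snd μ), integral_fun_fst, integral_fun_snd,
    probReal_univ, probReal_univ, one_smul, one_smul]

theorem covariance_fst_fst_add_snd_prod (hX : MemLp X 2 μ) (hX' : MemLp X' 2 μ)
    (hY : MemLp Y 2 ν) :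
    cov[fun p ↦ X p.1, fun p ↦ X' p.1 + Y p.2; μ.prod ν] = cov[X, X'; μ] := by
  have hfst : (μ.prod ν).map Prod.fst = μ := measurePreserving_fst.map_eq
  calc cov[fun p ↦ X p.1, fun p ↦ X' p.1 + Y p.2; μ.prod ν]
      = cov[fun p ↦ X p.1, fun p ↦ X' p.1; μ.prod ν] +
          cov[fun p ↦ X p.1, fun p ↦ Y p.2; μ.prod ν] :=
        covariance_add_right (hX.comp_fst ν) (hX'.comp_fst ν) (hY.comp_snd μ)
    _ = cov[X, X'; (μ.prod ν).map Prod.fst] := by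
        rw [covariance_fst_snd_prod hX hY, add_zero, covariance_map_fun
          (by rw [hfst]; exact hX.aestronglyMeasurable)
          (by rw [hfst]; exact hX'.aestronglyMeasurable) measurable_fst.aemeasurable]
    _ = cov[X, X'; μ] := by rw [hfst]

end Prod

section StdGaussian

variable {d : ℕ}

theorem e2norm_eq_norm_toLp (v : Fin d → ℝ) : e2norm v = ‖WithLp.toLp 2 v‖ := by
  simp only [e2norm, EuclideanSpace.norm_eq, norm_eq_abs, sq_abs]

theorem dotProduct_self_eq_e2norm_sq (v : Fin d → ℝ) : v ⬝ᵥ v = e2norm v ^ 2 := by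
  rw [e2norm, sq_sqrt (Finset.sum_nonneg fun i _ ↦ sq_nonneg (v i))]
  simp only [dotProduct, sq]

theorem abs_dotProduct_le_e2norm_mul_e2norm (v w : Fin d → ℝ) :
    |v ⬝ᵥ w| ≤ e2norm v * e2norm w := by
  rw [e2norm_eq_norm_toLp, e2norm_eq_norm_toLp, dotProduct_comm]
  exact abs_real_inner_le_norm (WithLp.toLp 2 v) (WithLp.toLp 2 w)

theorem e2norm_pos {v : Fin d → ℝ} (hv : v ≠ 0) : 0 < e2norm v := by
  rw [e2norm_eq_norm_toLp, norm_pos_iff]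
  exact (WithLp.toLp_eq_zero 2).not.mpr hv

theorem dotProduct_ofLp_eq_inner (a : Fin d → ℝ) (x : EuclideanSpace ℝ (Fin d)) :
    a ⬝ᵥ x.ofLp = inner ℝ (WithLp.toLp 2 a) x := by
  rw [EuclideanSpace.inner_eq_star_dotProduct, star_trivial, dotProduct_comm]

/-- The continuous linear functional `x ↦ ⟨a, x⟩` on `Fin d → ℝ`, through which the results on
images of Gaussian measures under continuous linear maps apply. -/
noncomputable def dotProductCLM (a : Fin d → ℝ) : StrongDual ℝ (Fin d → ℝ) :=
  (dotProductBilin ℝ ℝ a).toContinuousLinearMap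

theorem stdGaussian_eq_map_ofLp :
    stdGaussian d =
      (ProbabilityTheory.stdGaussian (EuclideanSpace ℝ (Fin d))).map WithLp.ofLp := by
  rw [← map_pi_eq_stdGaussian, Measure.map_map (by fun_prop) (by fun_prop)]
  exact Measure.map_id.symm

instance instIsGaussianStdGaussian : IsGaussian (stdGaussian d) := by
  rw [stdGaussian_eq_map_ofLp]
  exact isGaussian_map_equiv (PiLp.continuousLinearEquiv 2 ℝ fun _ : Fin d ↦ ℝ)

theorem memLp_two_dotProduct_stdGaussian (a : Fin d → ℝ) :
    MemLp (fun x ↦ a ⬝ᵥ x) 2 (stdGaussian d) :=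
  IsGaussian.memLp_dual (stdGaussian d) (dotProductCLM a) 2 (by simp)

theorem integral_dotProduct_stdGaussian (a : Fin d → ℝ) :
    ∫ x, a ⬝ᵥ x ∂stdGaussian d = 0 := by
  rw [stdGaussian_eq_map_ofLp, integral_map (by fun_prop) (by fun_prop)]
  simp_rw [dotProduct_ofLp_eq_inner]
  exact integral_strongDual_stdGaussian (innerSL ℝ (WithLp.toLp 2 a))

theorem covariance_dotProduct_stdGaussian (a b : Fin d → ℝ) :
    cov[fun x ↦ a ⬝ᵥ x, fun x ↦ b ⬝ᵥ x; stdGaussian d] = a ⬝ᵥ b := by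
  rw [stdGaussian_eq_map_ofLp, covariance_map_fun (by fun_prop) (by fun_prop) (by fun_prop)]
  simp_rw [dotProduct_ofLp_eq_inner]
  rw [← covarianceBilin_apply_eq_cov IsGaussian.memLp_two_id, covarianceBilin_stdGaussian,
    innerSL_apply_apply, ← dotProduct_ofLp_eq_inner]

theorem hasGaussianLaw_dotProduct_prodMk_dotProduct_add (a b : Fin d → ℝ) (ν : Measure ℝ)
    [IsGaussian ν] :
    HasGaussianLaw (fun q : (Fin d → ℝ) × ℝ ↦ (a ⬝ᵥ q.1, b ⬝ᵥ q.1 + q.2))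
      ((stdGaussian d).prod ν) :=
  IsGaussian.hasGaussianLaw_id.map_fun
    (((dotProductCLM a).comp (.fst ℝ (Fin d → ℝ) ℝ)).prod
      ((dotProductCLM b).comp (.fst ℝ (Fin d → ℝ) ℝ) + .snd ℝ (Fin d → ℝ) ℝ))

theorem integral_dotProduct_add_prod (b : Fin d → ℝ) (v : NNReal) :
    ∫ q, (b ⬝ᵥ q.1 + q.2) ∂(stdGaussian d).prod (gaussianReal 0 v) = 0 := by
  rw [integral_fst_add_snd_prod ((memLp_two_dotProduct_stdGaussian b).integrable one_le_two)
    (Y := fun y ↦ y) (IsGaussian.memLp_two_id.integrable one_le_two),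
    integral_dotProduct_stdGaussian, integral_id_gaussianReal, add_zero]

theorem covariance_dotProduct_dotProduct_add_prod (a b : Fin d → ℝ) (v : NNReal) :
    cov[fun q ↦ a ⬝ᵥ q.1, fun q ↦ b ⬝ᵥ q.1 + q.2; (stdGaussian d).prod (gaussianReal 0 v)] =
      a ⬝ᵥ b :=
  (covariance_fst_fst_add_snd_prod (memLp_two_dotProduct_stdGaussian a)
    (memLp_two_dotProduct_stdGaussian b) IsGaussian.memLp_two_id).trans
    (covariance_dotProduct_stdGaussian a b)

theorem variance_dotProduct_add_prod (b : Fin d → ℝ) (v : NNReal) :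
    Var[fun q ↦ b ⬝ᵥ q.1 + q.2; (stdGaussian d).prod (gaussianReal 0 v)] = v + e2norm b ^ 2 := by
  have hX := memLp_two_dotProduct_stdGaussian b
  rw [variance_add_prod hX (Y := fun y ↦ y) IsGaussian.memLp_two_id, variance_fun_id_gaussianReal,
    ← covariance_self hX.aemeasurable, covariance_dotProduct_stdGaussian,
    dotProduct_self_eq_e2norm_sq, add_comm]

theorem abs_integral_truncCosDiv_mul_dotProduct_le (a : Fin d → ℝ) {b : Fin d → ℝ} (hb : b ≠ 0)
    (v : NNReal) {ξ : ℝ} (hξ : 0 < ξ) :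
    |∫ q, truncCosDiv ξ (b ⬝ᵥ q.1 + q.2) * (a ⬝ᵥ q.1)
        ∂(stdGaussian d).prod (gaussianReal 0 v)| ≤
      |a ⬝ᵥ b| / (v + e2norm b ^ 2) * (0.26 * ξ ^ 3 / (v + e2norm b ^ 2) ^ (3 / 2 : ℝ)) := by
  have hmean : ∫ q, a ⬝ᵥ q.1 ∂(stdGaussian d).prod (gaussianReal 0 v) = 0 := by
    rw [integral_fun_fst, integral_dotProduct_stdGaussian, smul_zero]
  have hb' : 0 < e2norm b := e2norm_pos hb
  rw [← covariance_dotProduct_dotProduct_add_prod a b v, ← variance_dotProduct_add_prod b v]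
  refine abs_integral_truncCosDiv_mul_le (hasGaussianLaw_dotProduct_prodMk_dotProduct_add a b _)
    hmean (integral_dotProduct_add_prod b v) ?_ hξ
  rw [variance_dotProduct_add_prod]
  positivity

end StdGaussian

theorem stmt14_general {d : ℕ} (a b : Fin d → ℝ) (hb : b ≠ 0) (ς : ℝ) {ξ : ℝ} (hξ : 0 < ξ) :
    |∫ q : (Fin d → ℝ) × ℝ,
        (if ξ ≤ |(∑ i, b i * q.1 i) + q.2| then
          -Real.cos (Real.pi * ξ⁻¹ * ((∑ i, b i * q.1 i) + q.2)) /
              ((∑ i, b i * q.1 i) + q.2) * (∑ i, a i * q.1 i)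
        else 0)
      ∂((stdGaussian d).prod (gaussianReal 0 ⟨ς ^ 2, sq_nonneg ς⟩))|
    ≤ e2norm a / e2norm b * (e2norm b ^ 2 / (ς ^ 2 + e2norm b ^ 2)) *
        (0.26 * ξ ^ 3 / (ς ^ 2 + e2norm b ^ 2) ^ ((3 : ℝ) / 2)) := by
  have hb' : 0 < e2norm b := e2norm_pos hb
  have hmain := abs_integral_truncCosDiv_mul_dotProduct_le a hb ⟨ς ^ 2, sq_nonneg ς⟩ hξ
  simp only [truncCosDiv, ite_mul, zero_mul] at hmain
  calc _ ≤ |a ⬝ᵥ b| / (ς ^ 2 + e2norm b ^ 2) *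
        (0.26 * ξ ^ 3 / (ς ^ 2 + e2norm b ^ 2) ^ (3 / 2 : ℝ)) := hmain
    _ ≤ e2norm a * e2norm b / (ς ^ 2 + e2norm b ^ 2) *
        (0.26 * ξ ^ 3 / (ς ^ 2 + e2norm b ^ 2) ^ (3 / 2 : ℝ)) := by
      gcongr
      exact abs_dotProduct_le_e2norm_mul_e2norm a b
    _ = _ := by
      congr 1
      field_simp

/-- For `x ∼ N(0, I_d)` and independent `g ∼ N(0, ς²)`, and any `0 < ξ ≤ ‖b‖`:
`|E[1{|⟨b,x⟩+g| ≥ ξ}·(−cos(πξ⁻¹(⟨b,x⟩+g))/(⟨b,x⟩+g))·⟨a,x⟩]|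
  ≤ (‖a‖/‖b‖)·(‖b‖²/(ς²+‖b‖²))·0.26ξ³/(ς²+‖b‖²)^(3/2)`. -/
theorem stmt14 (d : ℕ) (hd : 1 ≤ d) (a b : Fin d → ℝ) (hb : b ≠ 0)
    (ς : ℝ) (hς : 0 ≤ ς) (ξ : ℝ) (hξ0 : 0 < ξ) (hξ : ξ ≤ e2norm b) :
    |∫ q : (Fin d → ℝ) × ℝ,
        (if ξ ≤ |(∑ i, b i * q.1 i) + q.2| then
          -Real.cos (Real.pi * ξ⁻¹ * ((∑ i, b i * q.1 i) + q.2)) /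
              ((∑ i, b i * q.1 i) + q.2) * (∑ i, a i * q.1 i)
        else 0)
      ∂((stdGaussian d).prod (gaussianReal 0 ⟨ς ^ 2, sq_nonneg ς⟩))|
    ≤ e2norm a / e2norm b * (e2norm b ^ 2 / (ς ^ 2 + e2norm b ^ 2)) *
        (0.26 * ξ ^ 3 / (ς ^ 2 + e2norm b ^ 2) ^ ((3 : ℝ) / 2)) :=
  stmt14_general a b hb ς hξ0
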